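/- There exists a constant C < ∞, depending only on d, such that for all Lebesgue measurable sets E, E* ⊆ ℝ^d of finite measure one has 𝒯(E, E*) ≤ C |E|^{d/(d+1)} |E*|^{d/(d+1)} (the endpoint restricted weak type inequality for T). -/

import Mathlib

open MeasureTheory ENNReal

noncomputable section

/-- `ℝ^{d-1}` -/
abbrev Vec (n : ℕ) : Type := EuclideanSpace ℝ (Fin n)

/-- `ℝ^d = ℝ^{d-1} × ℝ`, a point `x = (x', x_d)` -/
abbrev Pt (n : ℕ) : Type := Vec n × ℝ

/-- The Radon-like transform `Tf(x) = ∫_{ℝ^{d-1}} f(x' - t, x_d - |t|²) dt`. -/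
def radonT (n : ℕ) (f : Pt n → ℝ≥0∞) (x : Pt n) : ℝ≥0∞ :=
  ∫⁻ t : Vec n, f (x.1 - t, x.2 - ‖t‖ ^ 2)

/-- The incidence functional `𝒯(E, E*) = ∫_E T(χ_{E*})`. -/
def incT (n : ℕ) (E Estar : Set (Pt n)) : ℝ≥0∞ :=
  ∫⁻ x in E, radonT n (Estar.indicator 1) x

open FourierTransform in
lemma fourier_toLp_ae {V : Type*} [NormedAddCommGroup V] [InnerProductSpace ℝ V]
    [FiniteDimensional ℝ V] [MeasurableSpace V] [BorelSpace V]
    {f : V → ℂ} (h1 : Integrable f) (h2 : MemLp f 2) :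
    ((𝓕 (h2.toLp f) : Lp (α := V) ℂ 2) : V → ℂ) =ᵐ[volume] 𝓕 f := by
  refine ae_eq_of_integral_contDiff_smul_eq ?_ ?_ ?_
  · exact (Lp.memLp _).locallyIntegrable (by norm_num)
  · refine Continuous.locallyIntegrable ?_
    exact VectorFourier.fourierIntegral_continuous Real.continuous_fourierChar
      (L := innerₗ V) continuous_inner h1
  · intro g hg hgc
    have hgc' : HasCompactSupport (fun x => (g x : ℂ)) := hgc.comp_left (g := fun r : ℝ => (r : ℂ)) (by simp)
    have hg' : ContDiff ℝ (↑(⊤ : ℕ∞)) (fun x => (g x : ℂ)) := Complex.ofRealCLM.contDiff.comp hg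
    set φ : SchwartzMap V ℂ := hgc'.toSchwartzMap hg' with hφ
    have e1 := Lp.toTemperedDistribution_apply (𝓕 (h2.toLp f)) φ
    rw [← Lp.fourier_toTemperedDistribution_eq, TemperedDistribution.fourier_apply,
      Lp.toTemperedDistribution_apply] at e1
    have e2 : ∫ x, g x • ((𝓕 (h2.toLp f) : Lp (α := V) ℂ 2 volume) : V → ℂ) x
      = ∫ x, φ x • ((𝓕 (h2.toLp f) : Lp (α := V) ℂ 2 volume) : V → ℂ) x := by
      congr 1
    rw [e2, ← e1]
    have e3 : ∫ x, (𝓕 φ) x • (h2.toLp f : V → ℂ) x = ∫ x, (𝓕 φ) x • f x := by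
      apply integral_congr_ae
      filter_upwards [h2.coeFn_toLp] with x hx
      rw [hx]
    rw [e3]
    have e4 := VectorFourier.integral_fourierIntegral_smul_eq_flip (L := innerₗ V)
      Real.continuous_fourierChar continuous_inner φ.integrable h1 (μ := volume) (ν := volume)
    rw [flip_innerₗ] at e4
    exact e4

open FourierTransform in
lemma lintegral_fourier_sq {V : Type*} [NormedAddCommGroup V] [InnerProductSpace ℝ V]
    [FiniteDimensional ℝ V] [MeasurableSpace V] [BorelSpace V]
    {f : V → ℂ} (h1 : Integrable f) (h2 : MemLp f 2) :
    ∫⁻ x, ‖𝓕 f x‖ₑ ^ (2:ℝ) = ∫⁻ x, ‖f x‖ₑ ^ (2:ℝ) := by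
  have key : eLpNorm (𝓕 f) 2 volume = eLpNorm f 2 volume := by
    rw [← eLpNorm_congr_ae (fourier_toLp_ae h1 h2), ← eLpNorm_congr_ae h2.coeFn_toLp]
    rw [← Lp.enorm_def, ← Lp.enorm_def, ← ofReal_norm, ← ofReal_norm, Lp.norm_fourier_eq]
  rw [eLpNorm_eq_lintegral_rpow_enorm_toReal (by norm_num) (by norm_num),
    eLpNorm_eq_lintegral_rpow_enorm_toReal (by norm_num) (by norm_num)] at key
  simp only [toReal_ofNat] at key
  have := congrArg (fun z : ℝ≥0∞ => z ^ (2:ℝ)) key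
  simpa only [← ENNReal.rpow_mul, one_div, inv_mul_cancel₀ (two_ne_zero : (2:ℝ) ≠ 0), rpow_one] using this

open FourierTransform in
lemma inner_fourier {f g : ℝ → ℂ} (h1 : Integrable f) (h2 : MemLp f 2)
     (k1 : Integrable g) (k2 : MemLp g 2) :
    ∫ x, 𝓕 g x * (starRingEnd ℂ) (𝓕 f x) = ∫ x, g x * (starRingEnd ℂ) (f x) := by
  have key := Lp.inner_fourier_eq (h2.toLp f) (k2.toLp g)
  rw [L2.inner_def, L2.inner_def] at key
  simp only [RCLike.inner_apply] at key
  rw [← integral_congr_ae (g := fun x => g x * (starRingEnd ℂ) (f x)), ← key]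
  · apply integral_congr_ae
    filter_upwards [fourier_toLp_ae h1 h2, fourier_toLp_ae k1 k2] with x hx hy
    rw [hx, hy]
  · filter_upwards [h2.coeFn_toLp, k2.coeFn_toLp] with x hx hy
    rw [hx, hy]

/-- the character `exp(2πi r)` -/
def ee (r : ℝ) : ℂ := Complex.exp (2 * Real.pi * r * Complex.I)

lemma ee_add (a b : ℝ) : ee (a + b) = ee a * ee b := by
  simp only [ee]; rw [← Complex.exp_add]; congr 1; push_cast; ring

@[simp] lemma norm_ee (a : ℝ) : ‖ee a‖ = 1 := by
  have := Complex.norm_exp_ofReal_mul_I (2 * Real.pi * a)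
  simpa [ee] using this

lemma enorm_ee (a : ℝ) : ‖ee a‖ₑ = 1 := by rw [← ofReal_norm]; simp

@[fun_prop] lemma continuous_ee : Continuous ee := by unfold ee; fun_prop

lemma char_smul (r : ℝ) (z : ℂ) : Real.fourierChar r • z = ee r * z := by
  rw [Circle.smul_def, smul_eq_mul, Real.fourierChar_apply]
  simp [ee]

lemma osc_bound (n : ℕ) {l : ℝ} (hl : l ≠ 0) {u v : Vec n → ℂ}
    (u1 : Integrable u) (v1 : Integrable v) (v2 : MemLp v 2) :
    ‖∫ p : Vec n × Vec n,
      u p.1 * v p.2 * ee (l * ‖p.1 - p.2‖ ^ 2)‖ₑ ≤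
    ENNReal.ofReal (2 * |l|) ^ (-(n:ℝ) / 2) *
      ((∫⁻ x, ‖u x‖ₑ ^ (2:ℝ)) ^ (1 / (2:ℝ)) * (∫⁻ x, ‖v x‖ₑ ^ (2:ℝ)) ^ (1 / (2:ℝ))) := by
  have ci : Continuous (fun x : Vec n => ee (l * ‖x‖ ^ 2)) := by fun_prop
  set w : Vec n → ℂ := fun y => ee (l * ‖y‖ ^ 2) * v y with hw
  have w1 : Integrable w := by
    refine v1.bdd_mul (c := 1) ci.aestronglyMeasurable ?_
    filter_upwards with x; simp
  have wn : ∀ y, ‖w y‖ = ‖v y‖ := fun y => by simp [hw]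
  have w2 : MemLp w 2 := v2.of_le w1.aestronglyMeasurable (by filter_upwards with y; rw [wn])
  have int : Integrable (fun p : Vec n × Vec n => u p.1 * v p.2 * ee (l * ‖p.1 - p.2‖ ^ 2))
      (volume.prod volume) := by
    refine (u1.mul_prod v1).mul_bdd (c := 1) ?_ ?_
    · exact Continuous.aestronglyMeasurable (by fun_prop)
    · filter_upwards with x; simp
  have eq1 : ∫ p : Vec n × Vec n, u p.1 * v p.2 * ee (l * ‖p.1 - p.2‖ ^ 2)
     = ∫ x, u x * ee (l * ‖x‖ ^ 2) * FourierTransform.fourier w ((2 * l) • x) := by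
    rw [Measure.volume_eq_prod, integral_prod _ int]
    congr 1; ext x
    rw [Real.fourier_eq, ← integral_const_mul]
    congr 1; ext y
    simp only [hw]
    rw [norm_sub_sq_real, char_smul]
    have : l * (‖x‖ ^ 2 - 2 * inner ℝ x y + ‖y‖ ^ 2)
      = l * ‖x‖ ^ 2 + (-inner ℝ y ((2 * l) • x)) + l * ‖y‖ ^ 2 := by
      rw [inner_smul_right, real_inner_comm]; ring
    rw [this, ee_add, ee_add]
    ring
  have cF : Continuous (FourierTransform.fourier w) :=
    VectorFourier.fourierIntegral_continuous Real.continuous_fourierChar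
      (L := innerₗ (Vec n)) continuous_inner w1
  have sc : ∫⁻ x : Vec n, ‖FourierTransform.fourier w ((2 * l) • x)‖ₑ ^ (2:ℝ)
      = ENNReal.ofReal (2 * |l|) ^ (-(n:ℝ)) * ∫⁻ x, ‖v x‖ₑ ^ (2:ℝ) := by
    have h0 : (2 * l) ≠ 0 := by positivity
    have hm := lintegral_map (μ := (volume : Measure (Vec n))) (f := fun x => ‖FourierTransform.fourier w x‖ₑ ^ (2:ℝ))
      (g := fun x : Vec n => (2 * l) • x) (by fun_prop) (by fun_prop)
    rw [← hm, Measure.map_addHaar_smul _ h0, lintegral_smul_measure, lintegral_fourier_sq w1 w2]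
    congr 1
    · have : Module.finrank ℝ (Vec n) = n := by simp
      rw [this, abs_inv, abs_pow, abs_mul, abs_two, ENNReal.ofReal_inv_of_pos (by positivity),
        ENNReal.ofReal_pow (by positivity), ENNReal.rpow_neg, ENNReal.rpow_natCast]
    · congr 1; ext x; rw [← ofReal_norm, ← ofReal_norm, wn]
  rw [eq1]
  calc _ ≤ ∫⁻ x, ‖u x * ee (l * ‖x‖ ^ 2) * FourierTransform.fourier w ((2 * l) • x)‖ₑ :=
        enorm_integral_le_lintegral_enorm _
    _ = ∫⁻ x, ((fun x => ‖u x‖ₑ) * (fun x => ‖FourierTransform.fourier w ((2 * l) • x)‖ₑ)) x := by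
        congr 1; ext x
        simp [enorm_mul, enorm_ee]
    _ ≤ _ := ENNReal.lintegral_mul_le_Lp_mul_Lq volume (p := 2) (q := 2) Real.HolderConjugate.two_two
        u1.aestronglyMeasurable.enorm (Continuous.aemeasurable (by fun_prop))
    _ = _ := by
        rw [sc, ENNReal.mul_rpow_of_nonneg _ _ (by norm_num), ← ENNReal.rpow_mul]
        rw [show -(n:ℝ) * (1 / 2) = -(n:ℝ)/2 by ring]
        ring

/-- vertical slice -/
def slc {n : ℕ} (E : Set (Pt n)) (x : Vec n) : Set ℝ := {s | (x, s) ∈ E}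

/-- partial Fourier transform of the indicator function -/
def pf {n : ℕ} (E : Set (Pt n)) (x : Vec n) (l : ℝ) : ℂ :=
  FourierTransform.fourier ((slc E x).indicator (fun _ => (1:ℂ))) l

lemma slc_meas {n : ℕ} {E : Set (Pt n)} (hE : MeasurableSet E) (x : Vec n) :
    MeasurableSet (slc E x) := hE.preimage measurable_prodMk_left

/-- boundedness -/
def Bd {n : ℕ} (k : ℝ) (E : Set (Pt n)) : Prop := ∀ p ∈ E, ‖p.1‖ ≤ k ∧ |p.2| ≤ k

lemma slc_vol {n : ℕ} {k : ℝ} {E : Set (Pt n)} (hb : Bd k E) (x : Vec n) :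
    volume (slc E x) ≤ ENNReal.ofReal (2 * k) := by
  calc volume (slc E x) ≤ volume (Set.Icc (-k) k) :=
        measure_mono fun s hs => abs_le.1 (hb _ hs).2
    _ = _ := by rw [Real.volume_Icc]; congr 1; ring

lemma slc_fin {n : ℕ} {k : ℝ} {E : Set (Pt n)} (hb : Bd k E) (x : Vec n) :
    volume (slc E x) ≠ ⊤ := ((slc_vol hb x).trans_lt ofReal_lt_top).ne

lemma slc_memLp {n : ℕ} {k : ℝ} {E : Set (Pt n)} (hE : MeasurableSet E) (hb : Bd k E) (x : Vec n)
    (p : ℝ≥0∞) : MemLp ((slc E x).indicator (fun _ => (1:ℂ))) p :=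
  memLp_indicator_const p (slc_meas hE x) _ (Or.inr (slc_fin hb x))

lemma slc_int {n : ℕ} {k : ℝ} {E : Set (Pt n)} (hE : MeasurableSet E) (hb : Bd k E) (x : Vec n) :
    Integrable ((slc E x).indicator (fun _ => (1:ℂ))) :=
  memLp_one_iff_integrable.1 (slc_memLp hE hb x 1)

lemma slc_total {n : ℕ} {E : Set (Pt n)} (hE : MeasurableSet E) :
    ∫⁻ x, volume (slc E x) = volume E := by
  rw [Measure.volume_eq_prod, Measure.prod_apply hE]; rfl

lemma slc_measurable {n : ℕ} {E : Set (Pt n)} (hE : MeasurableSet E) :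
    Measurable (fun x => volume (slc E x)) := measurable_measure_prodMk_left hE

lemma pf_eq {n : ℕ} (E : Set (Pt n)) (x : Vec n) (l : ℝ) :
    pf E x l = ∫ s, ee (-(s * l)) * E.indicator (fun _ => (1:ℂ)) (x, s) := by
  rw [pf, Real.fourier_real_eq]
  congr 1; ext s
  rw [char_smul]; rfl

lemma pf_meas {n : ℕ} {E : Set (Pt n)} (hE : MeasurableSet E) :
    StronglyMeasurable (fun p : Vec n × ℝ => pf E p.1 p.2) := by
  simp_rw [pf_eq]
  refine StronglyMeasurable.integral_prod_right'
    (f := fun q : (Vec n × ℝ) × ℝ => ee (-(q.2 * q.1.2)) * E.indicator (fun _ => (1:ℂ)) (q.1.1, q.2)) ?_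
  refine StronglyMeasurable.mul (Continuous.stronglyMeasurable (by fun_prop)) ?_
  exact ((measurable_const.indicator hE).comp
    (g := E.indicator (fun _ => (1:ℂ))) (f := fun q : (Vec n × ℝ) × ℝ => (q.1.1, q.2))
    (by fun_prop)).stronglyMeasurable

lemma pf_le {n : ℕ} {E : Set (Pt n)} (hE : MeasurableSet E) (x : Vec n) (l : ℝ) :
    ‖pf E x l‖ₑ ≤ volume (slc E x) := by
  rw [pf, Real.fourier_real_eq]
  refine (enorm_integral_le_lintegral_enorm _).trans ?_
  rw [← lintegral_indicator_one (slc_meas hE x)]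
  refine lintegral_mono fun s => ?_
  rw [char_smul, enorm_mul, enorm_ee, one_mul]
  by_cases h : s ∈ slc E x <;> simp [h]

lemma pf_sq {n : ℕ} {k : ℝ} {E : Set (Pt n)} (hE : MeasurableSet E) (hb : Bd k E) (x : Vec n) :
    ∫⁻ l, ‖pf E x l‖ₑ ^ (2:ℝ) = volume (slc E x) := by
  unfold pf
  rw [lintegral_fourier_sq (slc_int hE hb x) (slc_memLp hE hb x 2),
    ← lintegral_indicator_one (slc_meas hE x)]
  refine lintegral_congr fun s => ?_
  by_cases h : s ∈ slc E x <;> simp [h]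

lemma pf_sq_total {n : ℕ} {k : ℝ} {E : Set (Pt n)} (hE : MeasurableSet E) (hb : Bd k E) :
    ∫⁻ l, ∫⁻ x, ‖pf E x l‖ₑ ^ (2:ℝ) = volume E := by
  rw [lintegral_lintegral_swap, ← slc_total hE]
  · simp_rw [pf_sq hE hb]
  · exact ((((pf_meas hE).comp_measurable measurable_swap).enorm).pow_const _).aemeasurable

lemma pf_zero {n : ℕ} {k : ℝ} {E : Set (Pt n)} (hb : Bd k E) {x : Vec n} (hx : k < ‖x‖) (l : ℝ) :
    pf E x l = 0 := by
  have : slc E x = ∅ := by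
    ext s
    simp only [Set.mem_empty_iff_false, iff_false]
    intro h
    exact absurd (hb _ h).1 (not_le.2 hx)
  rw [pf, this, Real.fourier_real_eq]; simp

lemma pf_memLp {n : ℕ} {k : ℝ} {E : Set (Pt n)} (hE : MeasurableSet E) (hb : Bd k E) (l : ℝ)
    (p : ℝ≥0∞) : MemLp (fun x => pf E x l) p := by
  refine MemLp.of_le (g := (Metric.closedBall (0 : Vec n) k).indicator (fun _ => 2 * k))
    (memLp_indicator_const p Metric.isClosed_closedBall.measurableSet _
      (Or.inr measure_closedBall_lt_top.ne)) ?_ ?_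
  · exact ((pf_meas hE).comp_measurable (measurable_prodMk_right (y := l))).aestronglyMeasurable
  · filter_upwards with x
    by_cases hx : ‖x‖ ≤ k
    · have hk : 0 ≤ 2 * k := by linarith [norm_nonneg x]
      rw [Set.indicator_of_mem (by simpa using hx), Real.norm_of_nonneg hk]
      have := (pf_le hE x l).trans (slc_vol hb x)
      rw [← ofReal_norm] at this
      exact (ENNReal.ofReal_le_ofReal_iff hk).1 this
    · rw [pf_zero hb (not_le.1 hx)]; simp

/-- integrand of the incidence form -/
def inc {n : ℕ} (E E' : Set (Pt n)) (q : Vec n × Vec n) (s : ℝ) : ℝ≥0∞ :=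
  E.indicator 1 (q.1, s) * E'.indicator 1 (q.2, s - ‖q.1 - q.2‖ ^ 2)

/-- kernel on the Fourier side -/
def ker {n : ℕ} (E E' : Set (Pt n)) (q : Vec n × Vec n) (l : ℝ) : ℂ :=
  pf E q.1 l * (starRingEnd ℂ) (pf E' q.2 l) * ee (l * ‖q.1 - q.2‖ ^ 2)

lemma inc_meas {n : ℕ} {E E' : Set (Pt n)} (hE : MeasurableSet E) (hE' : MeasurableSet E') :
    Measurable (fun p : (Vec n × Vec n) × ℝ => inc E E' p.1 p.2) := by
  unfold inc
  refine Measurable.mul ?_ ?_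
  · exact (measurable_one.indicator hE).comp (g := E.indicator 1)
      (f := fun q : (Vec n × Vec n) × ℝ => (q.1.1, q.2)) (by fun_prop)
  · exact (measurable_one.indicator hE').comp (g := E'.indicator 1)
      (f := fun q : (Vec n × Vec n) × ℝ => (q.1.2, q.2 - ‖q.1.1 - q.1.2‖ ^ 2)) (by fun_prop)

lemma inc_ne_top {n : ℕ} (E E' : Set (Pt n)) (q : Vec n × Vec n) (s : ℝ) : inc E E' q s ≠ ⊤ := by
  classical
  unfold inc
  refine ENNReal.mul_ne_top ?_ ?_ <;>
  · rw [Set.indicator_apply]; split_ifs <;> simp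

lemma ker_parseval {n : ℕ} {k : ℝ} {E E' : Set (Pt n)} (hE : MeasurableSet E) (hb : Bd k E)
    (hE' : MeasurableSet E') (hb' : Bd k E') (q : Vec n × Vec n) :
    ∫ l, ker E E' q l = (((∫⁻ s, inc E E' q s).toReal : ℝ) : ℂ) := by
  set c := ‖q.1 - q.2‖ ^ 2 with hc
  have mp : MeasurePreserving (fun s : ℝ => s - c) volume volume := measurePreserving_sub_right _ c
  set g := ((slc E' q.2).indicator (fun _ => (1:ℂ))) with hg
  have g1 : Integrable (fun s => g (s - c)) := (slc_int hE' hb' q.2).comp_sub_right c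
  have g2 : MemLp (fun s => g (s - c)) 2 := (slc_memLp hE' hb' q.2 2).comp_measurePreserving mp
  have key := inner_fourier g1 g2 (slc_int hE hb q.1) (slc_memLp hE hb q.1 2)
  have hF : ∀ l, FourierTransform.fourier (fun s => g (s - c)) l = ee (-(c * l)) * pf E' q.2 l := by
    intro l
    rw [pf, Real.fourier_real_eq, Real.fourier_real_eq, ← integral_const_mul,
      ← integral_add_right_eq_self _ c]
    congr 1; ext s
    simp only [add_sub_cancel_right]
    rw [char_smul, char_smul, ← mul_assoc, ← ee_add]
    congr 2; ring
  have conj_ee : ∀ r, (starRingEnd ℂ) (ee (-r)) = ee r := by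
    intro r
    simp only [ee, ← Complex.exp_conj]
    congr 1; simp
    left; exact Complex.conj_ofNat 2
  have e1 : ∫ l, ker E E' q l = ∫ l, FourierTransform.fourier ((slc E q.1).indicator (fun _ => (1:ℂ))) l *
      (starRingEnd ℂ) (FourierTransform.fourier (fun s => g (s - c)) l) := by
    congr 1; ext l
    rw [hF, map_mul, conj_ee, ker, ← hc, pf, mul_comm l c]; ring
  rw [e1, key, ← integral_toReal, ← integral_complex_ofReal]
  · congr 1; ext s
    have a1 : s ∈ slc E q.1 ↔ (q.1, s) ∈ E := Iff.rfl
    have a2 : s - c ∈ slc E' q.2 ↔ (q.2, s - c) ∈ E' := Iff.rfl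
    simp only [inc, hg, ← hc]
    by_cases h1 : (q.1, s) ∈ E <;> by_cases h2 : (q.2, s - c) ∈ E' <;>
      simp [h1, h2, Set.indicator, a1, a2]
  · exact ((inc_meas hE hE').comp measurable_prodMk_left).aemeasurable
  · filter_upwards with s using (inc_ne_top E E' q s).lt_top

lemma ker_meas {n : ℕ} {E E' : Set (Pt n)} (hE : MeasurableSet E) (hE' : MeasurableSet E') :
    Measurable (fun p : (Vec n × Vec n) × ℝ => ker E E' p.1 p.2) := by
  unfold ker
  have h1 : Measurable (fun p : (Vec n × Vec n) × ℝ => pf E p.1.1 p.2) :=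
    (pf_meas hE).measurable.comp (f := fun p : (Vec n × Vec n) × ℝ => (p.1.1, p.2)) (by fun_prop)
  have h2 : Measurable (fun p : (Vec n × Vec n) × ℝ => pf E' p.1.2 p.2) :=
    (pf_meas hE').measurable.comp (f := fun p : (Vec n × Vec n) × ℝ => (p.1.2, p.2)) (by fun_prop)
  have h3 : Measurable (fun p : (Vec n × Vec n) × ℝ => ee (p.2 * ‖p.1.1 - p.1.2‖ ^ 2)) :=
    Continuous.measurable (by fun_prop)
  exact (h1.mul (Complex.continuous_conj.measurable.comp h2)).mul h3

lemma ker_enorm {n : ℕ} (E E' : Set (Pt n)) (q : Vec n × Vec n) (l : ℝ) :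
    ‖ker E E' q l‖ₑ = ‖pf E q.1 l‖ₑ * ‖pf E' q.2 l‖ₑ := by
  rw [ker, enorm_mul, enorm_mul, enorm_ee, mul_one]
  congr 1
  rw [← ofReal_norm, ← ofReal_norm, RCLike.norm_conj]

lemma mul_le_sq_add (a b : ℝ≥0∞) : a * b ≤ a ^ (2:ℝ) + b ^ (2:ℝ) := by
  rw [ENNReal.rpow_two, ENNReal.rpow_two, sq, sq]
  rcases le_total a b with h | h
  · exact (mul_le_mul_left h b).trans le_add_self
  · exact (mul_le_mul_right h a).trans le_self_add

lemma ker_int {n : ℕ} {k : ℝ} {E E' : Set (Pt n)} (hE : MeasurableSet E) (hb : Bd k E)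
    (hE' : MeasurableSet E') (hb' : Bd k E') (f1 : volume E ≠ ⊤) (f2 : volume E' ≠ ⊤) :
    Integrable (fun p : (Vec n × Vec n) × ℝ => ker E E' p.1 p.2) (volume.prod volume) := by
  refine ⟨(ker_meas hE hE').aestronglyMeasurable, ?_⟩
  set B := Metric.closedBall (0 : Vec n) k
  have hB : MeasurableSet B := Metric.isClosed_closedBall.measurableSet
  have mB : Measurable (B.indicator (1 : Vec n → ℝ≥0∞)) := measurable_one.indicator hB
  have bnd : ∀ p : (Vec n × Vec n) × ℝ, ‖ker E E' p.1 p.2‖ₑ ≤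
      B.indicator 1 p.1.2 * ‖pf E p.1.1 p.2‖ₑ ^ (2:ℝ) +
      B.indicator 1 p.1.1 * ‖pf E' p.1.2 p.2‖ₑ ^ (2:ℝ) := by
    intro p
    rw [ker_enorm]
    by_cases h1 : ‖p.1.1‖ ≤ k
    · by_cases h2 : ‖p.1.2‖ ≤ k
      · rw [Set.indicator_of_mem (by simpa [B] using h2), Set.indicator_of_mem (by simpa [B] using h1)]
        simpa using mul_le_sq_add _ _
      · rw [pf_zero hb' (not_le.1 h2)]; simp
    · rw [pf_zero hb (not_le.1 h1)]; simp
  have m1 : Measurable (fun p : (Vec n × Vec n) × ℝ => ‖pf E p.1.1 p.2‖ₑ ^ (2:ℝ)) :=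
    (((pf_meas hE).measurable.comp (f := fun p : (Vec n × Vec n) × ℝ => (p.1.1, p.2))
      (by fun_prop)).enorm).pow_const _
  have m2 : Measurable (fun p : (Vec n × Vec n) × ℝ => ‖pf E' p.1.2 p.2‖ₑ ^ (2:ℝ)) :=
    (((pf_meas hE').measurable.comp (f := fun p : (Vec n × Vec n) × ℝ => (p.1.2, p.2))
      (by fun_prop)).enorm).pow_const _
  have n1 : Measurable (fun p : (Vec n × Vec n) × ℝ => B.indicator (1 : Vec n → ℝ≥0∞) p.1.2) :=
    mB.comp (by fun_prop)
  have n2 : Measurable (fun p : (Vec n × Vec n) × ℝ => B.indicator (1 : Vec n → ℝ≥0∞) p.1.1) :=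
    mB.comp (by fun_prop)
  have hBf : volume B ≠ ⊤ := measure_closedBall_lt_top.ne
  rw [hasFiniteIntegral_iff_enorm]
  refine (lintegral_mono bnd).trans_lt ?_
  have nm1 : Measurable (fun p : (Vec n × Vec n) × ℝ =>
      B.indicator (1 : Vec n → ℝ≥0∞) p.1.2 * ‖pf E p.1.1 p.2‖ₑ ^ (2:ℝ)) := n1.mul m1
  have nm2 : Measurable (fun p : (Vec n × Vec n) × ℝ =>
      B.indicator (1 : Vec n → ℝ≥0∞) p.1.1 * ‖pf E' p.1.2 p.2‖ₑ ^ (2:ℝ)) := n2.mul m2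
  rw [lintegral_add_left nm1, lintegral_prod _ nm1.aemeasurable,
    lintegral_prod _ nm2.aemeasurable]
  have i1 : ∀ q : Vec n × Vec n, ∫⁻ l, B.indicator 1 q.2 * ‖pf E q.1 l‖ₑ ^ (2:ℝ)
      = volume (slc E q.1) * B.indicator 1 q.2 := by
    intro q
    have mm : Measurable (fun l => ‖pf E q.1 l‖ₑ ^ (2:ℝ)) :=
      ((pf_meas hE).measurable.comp (measurable_prodMk_left (x := q.1))).enorm.pow_const _
    rw [lintegral_const_mul _ mm, pf_sq hE hb, mul_comm]
  have i2 : ∀ q : Vec n × Vec n, ∫⁻ l, B.indicator 1 q.1 * ‖pf E' q.2 l‖ₑ ^ (2:ℝ)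
      = B.indicator 1 q.1 * volume (slc E' q.2) := by
    intro q
    have mm : Measurable (fun l => ‖pf E' q.2 l‖ₑ ^ (2:ℝ)) :=
      ((pf_meas hE').measurable.comp (measurable_prodMk_left (x := q.2))).enorm.pow_const _
    rw [lintegral_const_mul _ mm, pf_sq hE' hb']
  simp_rw [i1, i2]
  rw [Measure.volume_eq_prod, lintegral_prod_mul (slc_measurable hE).aemeasurable mB.aemeasurable,
    lintegral_prod_mul mB.aemeasurable (slc_measurable hE').aemeasurable, slc_total hE, slc_total hE',
    lintegral_indicator_one hB]
  exact ENNReal.add_lt_top.2 ⟨(ENNReal.mul_ne_top f1 hBf).lt_top, (ENNReal.mul_ne_top hBf f2).lt_top⟩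

lemma inc_le_ker {n : ℕ} {k : ℝ} {E E' : Set (Pt n)} (hE : MeasurableSet E) (hb : Bd k E)
    (hE' : MeasurableSet E') (hb' : Bd k E') (f1 : volume E ≠ ⊤) (f2 : volume E' ≠ ⊤) :
    ∫⁻ q, ∫⁻ s, inc E E' q s ≤ ∫⁻ l, ‖∫ q, ker E E' q l‖ₑ := by
  have ki := ker_int hE hb hE' hb' f1 f2
  have ji := ki.integral_prod_left
  simp only [ker_parseval hE hb hE' hb'] at ji
  have ji' : Integrable (fun q => (∫⁻ s, inc E E' q s).toReal) := by
    simpa using ji.re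
  have jf : ∀ q, ∫⁻ s, inc E E' q s ≠ ⊤ := by
    intro q
    refine ((lintegral_mono (g := (slc E q.1).indicator 1) fun s => ?_).trans_lt ?_).ne
    · unfold inc
      refine (mul_le_mul' (le_refl _) (Set.indicator_le_self' (by simp) _)).trans ?_
      simp only [Pi.one_apply, mul_one]
      rfl
    · rw [lintegral_indicator_one (slc_meas hE _)]; exact (slc_fin hb _).lt_top
  calc ∫⁻ q, ∫⁻ s, inc E E' q s = ∫⁻ q, ENNReal.ofReal (∫⁻ s, inc E E' q s).toReal :=
        lintegral_congr fun q => (ENNReal.ofReal_toReal (jf q)).symm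
    _ = ENNReal.ofReal (∫ q, (∫⁻ s, inc E E' q s).toReal) :=
        (ofReal_integral_eq_lintegral_ofReal ji' (by filter_upwards with q using toReal_nonneg)).symm
    _ ≤ ‖((∫ q, (∫⁻ s, inc E E' q s).toReal : ℝ) : ℂ)‖ₑ := by
        rw [← ofReal_norm, Complex.norm_real]
        exact ENNReal.ofReal_le_ofReal (le_abs_self _)
    _ = ‖∫ l, ∫ q, ker E E' q l‖ₑ := by
        rw [← integral_complex_ofReal, ← integral_integral_swap (f := ker E E') ki]
        simp only [ker_parseval hE hb hE' hb']
    _ ≤ _ := enorm_integral_le_lintegral_enorm _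

lemma ker_low {n : ℕ} {E E' : Set (Pt n)} (hE : MeasurableSet E) (hE' : MeasurableSet E') (l : ℝ) :
    ‖∫ q, ker E E' q l‖ₑ ≤ volume E * volume E' := by
  refine (enorm_integral_le_lintegral_enorm _).trans ?_
  rw [← slc_total hE, ← slc_total hE', ← lintegral_prod_mul (slc_measurable hE).aemeasurable
    (slc_measurable hE').aemeasurable]
  refine lintegral_mono fun q => ?_
  rw [ker_enorm]
  exact mul_le_mul' (pf_le hE _ _) (pf_le hE' _ _)

lemma ker_high {n : ℕ} {k : ℝ} {E E' : Set (Pt n)} (hE : MeasurableSet E) (hb : Bd k E)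
    (hE' : MeasurableSet E') (hb' : Bd k E') {l : ℝ} (hl : l ≠ 0) :
    ‖∫ q, ker E E' q l‖ₑ ≤ ENNReal.ofReal (2 * |l|) ^ (-(n:ℝ) / 2) *
      ((∫⁻ x, ‖pf E x l‖ₑ ^ (2:ℝ)) ^ (1 / (2:ℝ)) * (∫⁻ x, ‖pf E' x l‖ₑ ^ (2:ℝ)) ^ (1 / (2:ℝ))) := by
  have nc : ∀ z : ℂ, ‖(starRingEnd ℂ) z‖ₑ = ‖z‖ₑ := fun z => by
    rw [← ofReal_norm, ← ofReal_norm, RCLike.norm_conj]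
  have h := pf_memLp hE' hb' l
  have h' : ∀ p, MemLp (fun x => (starRingEnd ℂ) (pf E' x l)) p := fun p =>
    (h p).of_le (Complex.continuous_conj.comp_aestronglyMeasurable (h p).1)
      (by filter_upwards with x; rw [RCLike.norm_conj])
  have := osc_bound n hl (memLp_one_iff_integrable.1 (pf_memLp hE hb l 1))
    (memLp_one_iff_integrable.1 (h' 1)) (h' 2)
  simp only [nc] at this
  exact this

lemma main_bdd {n : ℕ} {k : ℝ} {E E' : Set (Pt n)} (hE : MeasurableSet E) (hb : Bd k E)
    (hE' : MeasurableSet E') (hb' : Bd k E') (f1 : volume E ≠ ⊤) (f2 : volume E' ≠ ⊤)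
    {ρ : ℝ} (hρ : 0 < ρ) :
    ∫⁻ q, ∫⁻ s, inc E E' q s ≤ ENNReal.ofReal ρ * (volume E * volume E') +
      ENNReal.ofReal ρ ^ (-(n:ℝ) / 2) * (volume E ^ (1 / (2:ℝ)) * volume E' ^ (1 / (2:ℝ))) := by
  refine (inc_le_ker hE hb hE' hb' f1 f2).trans ?_
  set N : ℝ → ℝ≥0∞ := fun l => (∫⁻ x, ‖pf E x l‖ₑ ^ (2:ℝ)) ^ (1 / (2:ℝ))
  set N' : ℝ → ℝ≥0∞ := fun l => (∫⁻ x, ‖pf E' x l‖ₑ ^ (2:ℝ)) ^ (1 / (2:ℝ))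
  have mN : Measurable N :=
    (((pf_meas hE).measurable.enorm.pow_const _).lintegral_prod_left').pow_const _
  have mN' : Measurable N' :=
    (((pf_meas hE').measurable.enorm.pow_const _).lintegral_prod_left').pow_const _
  have pt : ∀ l, ‖∫ q, ker E E' q l‖ₑ ≤
      (Set.Icc (-(ρ / 2)) (ρ / 2)).indicator (fun _ => volume E * volume E') l +
      ENNReal.ofReal ρ ^ (-(n:ℝ) / 2) * (N * N') l := by
    intro l
    by_cases hl : l ∈ Set.Icc (-(ρ / 2)) (ρ / 2)
    · rw [Set.indicator_of_mem hl]
      exact (ker_low hE hE' l).trans le_self_add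
    · have hl' : ρ / 2 < |l| := by
        by_contra hc
        exact hl (abs_le.1 (not_lt.1 hc))
      have l0 : l ≠ 0 := by
        rintro rfl
        simp at hl'; linarith
      refine (ker_high hE hb hE' hb' l0).trans (le_trans ?_ le_add_self)
      refine mul_le_mul' ?_ le_rfl
      rw [neg_div, ENNReal.rpow_neg, ENNReal.rpow_neg, ENNReal.inv_le_inv]
      exact ENNReal.rpow_le_rpow (ENNReal.ofReal_le_ofReal (by linarith)) (by positivity)
  refine (lintegral_mono pt).trans ?_
  rw [lintegral_add_left (measurable_const.indicator measurableSet_Icc),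
    lintegral_indicator_const measurableSet_Icc, Real.volume_Icc,
    lintegral_const_mul _ (mN.mul mN')]
  refine add_le_add (le_of_eq ?_) (mul_le_mul' le_rfl ?_)
  · rw [mul_comm]; congr 2; ring
  · refine (ENNReal.lintegral_mul_le_Lp_mul_Lq volume Real.HolderConjugate.two_two
      mN.aemeasurable mN'.aemeasurable).trans (le_of_eq ?_)
    have e : ∀ z : ℝ≥0∞, (z ^ (1 / (2:ℝ))) ^ (2:ℝ) = z := fun z => by
      rw [← ENNReal.rpow_mul]; norm_num
    simp only [N, N', e]
    rw [pf_sq_total hE hb, pf_sq_total hE' hb']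

/-- truncation to a bounded region -/
def trunc {n : ℕ} (k : ℕ) (E : Set (Pt n)) : Set (Pt n) := E ∩ {p | ‖p.1‖ ≤ k ∧ |p.2| ≤ k}

lemma trunc_meas {n : ℕ} (k : ℕ) {E : Set (Pt n)} (hE : MeasurableSet E) :
    MeasurableSet (trunc k E) := by
  refine hE.inter (MeasurableSet.inter ?_ ?_)
  · exact measurableSet_le (f := fun p : Pt n => ‖p.1‖) (by fun_prop) measurable_const
  · exact measurableSet_le (f := fun p : Pt n => |p.2|) (by fun_prop) measurable_const

lemma trunc_mono {n : ℕ} {k m : ℕ} (h : k ≤ m) (E : Set (Pt n)) : trunc k E ⊆ trunc m E := by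
  rintro p ⟨h1, h2, h3⟩
  have : (k:ℝ) ≤ m := by exact_mod_cast h
  exact ⟨h1, h2.trans this, h3.trans this⟩

lemma trunc_bd {n : ℕ} (k : ℕ) (E : Set (Pt n)) : Bd k (trunc k E) := fun _ hp => hp.2

lemma inc_trunc {n : ℕ} (E E' : Set (Pt n)) (q : Vec n × Vec n) (s : ℝ) :
    inc E E' q s ≤ ⨆ k : ℕ, inc (trunc k E) (trunc k E') q s := by
  by_cases h1 : (q.1, s) ∈ E
  · by_cases h2 : (q.2, s - ‖q.1 - q.2‖ ^ 2) ∈ E'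
    · obtain ⟨k, hk⟩ := exists_nat_ge (max (max ‖q.1‖ |s|) (max ‖q.2‖ |s - ‖q.1 - q.2‖ ^ 2|))
      simp only [max_le_iff] at hk
      refine le_iSup_of_le k ?_
      have a1 : (q.1, s) ∈ trunc k E := ⟨h1, hk.1⟩
      have a2 : (q.2, s - ‖q.1 - q.2‖ ^ 2) ∈ trunc k E' := ⟨h2, hk.2⟩
      simp [inc, h1, h2, a1, a2]
    · simp [inc, h2]
  · simp [inc, h1]

lemma inc_mono {n : ℕ} {E E' F F' : Set (Pt n)} (h : E ⊆ F) (h' : E' ⊆ F')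
    (q : Vec n × Vec n) (s : ℝ) : inc E E' q s ≤ inc F F' q s :=
  mul_le_mul' (Set.indicator_le_indicator_of_subset h (fun _ => zero_le) _)
    (Set.indicator_le_indicator_of_subset h' (fun _ => zero_le) _)

lemma main_gen {n : ℕ} {E E' : Set (Pt n)} (hE : MeasurableSet E)
    (hE' : MeasurableSet E') (f1 : volume E ≠ ⊤) (f2 : volume E' ≠ ⊤)
    {ρ : ℝ} (hρ : 0 < ρ) :
    ∫⁻ q, ∫⁻ s, inc E E' q s ≤ ENNReal.ofReal ρ * (volume E * volume E') +
      ENNReal.ofReal ρ ^ (-(n:ℝ) / 2) * (volume E ^ (1 / (2:ℝ)) * volume E' ^ (1 / (2:ℝ))) := by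
  have m : ∀ k, Measurable (fun p : (Vec n × Vec n) × ℝ => inc (trunc k E) (trunc k E') p.1 p.2) :=
    fun k => inc_meas (trunc_meas k hE) (trunc_meas k hE')
  have l1 : ∀ k, volume (trunc k E) ≤ volume E := fun k => measure_mono Set.inter_subset_left
  have l2 : ∀ k, volume (trunc k E') ≤ volume E' := fun k => measure_mono Set.inter_subset_left
  rw [← lintegral_prod (fun p : (Vec n × Vec n) × ℝ => inc E E' p.1 p.2)
    (inc_meas hE hE').aemeasurable]
  refine (lintegral_mono fun p : (Vec n × Vec n) × ℝ => inc_trunc E E' p.1 p.2).trans ?_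
  rw [lintegral_iSup m (fun i j h p => inc_mono (trunc_mono h E) (trunc_mono h E') _ _)]
  refine iSup_le fun k => ?_
  rw [lintegral_prod _ (m k).aemeasurable]
  refine (main_bdd (trunc_meas k hE) (trunc_bd k E) (trunc_meas k hE') (trunc_bd k E')
    ((l1 k).trans_lt f1.lt_top).ne ((l2 k).trans_lt f2.lt_top).ne hρ).trans ?_
  gcongr <;> exact Set.inter_subset_left

lemma incT_eq {n : ℕ} {E E' : Set (Pt n)} (hE : MeasurableSet E) (hE' : MeasurableSet E') :
    incT n E E' = ∫⁻ q, ∫⁻ s, inc E E' q s := by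
  have hm := inc_meas hE hE'
  have e1 : ∀ x : Pt n, E.indicator (radonT n (E'.indicator 1)) x
      = ∫⁻ y, inc E E' (x.1, y) x.2 := by
    intro x
    by_cases hx : x ∈ E
    · rw [Set.indicator_of_mem hx, radonT]
      rw [← lintegral_sub_left_eq_self _ x.1]
      refine lintegral_congr fun t => ?_
      simp [inc, hx]
    · simp [inc, hx]
  rw [incT, ← lintegral_indicator hE]
  simp_rw [e1]
  have m2 : Measurable (fun x : Pt n => ∫⁻ y, inc E E' (x.1, y) x.2) :=
    Measurable.lintegral_prod_right' (f := fun z : Pt n × Vec n => inc E E' (z.1.1, z.2) z.1.2)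
      (hm.comp (f := fun z : Pt n × Vec n => ((z.1.1, z.2), z.1.2)) (by fun_prop))
  rw [Measure.volume_eq_prod, lintegral_prod _ m2.aemeasurable, Measure.volume_eq_prod,
    lintegral_prod _ (hm.lintegral_prod_right').aemeasurable]
  refine lintegral_congr fun x => ?_
  rw [lintegral_lintegral_swap]
  exact (hm.comp (f := fun z : ℝ × Vec n => ((x, z.2), z.1)) (by fun_prop)).aemeasurable

/-- the endpoint restricted weak type inequality
`𝒯(E,E*) ≤ C |E|^{d/(d+1)} |E*|^{d/(d+1)}`. -/
theorem stmt0 (d : ℕ) (hd : 2 ≤ d) :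
    ∃ C : ℝ, 0 < C ∧
      ∀ (E Es : Set (Pt (d - 1))), MeasurableSet E → MeasurableSet Es →
        volume E < ⊤ → volume Es < ⊤ →
        incT (d - 1) E Es ≤
          ENNReal.ofReal C * volume E ^ ((d : ℝ) / (d + 1)) *
            volume Es ^ ((d : ℝ) / (d + 1)) := by
  refine ⟨2, by norm_num, fun E Es hE hEs f1 f2 => ?_⟩
  rw [incT_eq hE hEs]
  have hd0 : (0:ℝ) < d + 1 := by positivity
  have hn : ((d - 1 : ℕ) : ℝ) = (d:ℝ) - 1 := by
    rw [Nat.cast_sub (by omega)]; simp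
  have main := fun (ρ : ℝ) (hρ : 0 < ρ) => main_gen hE hEs f1.ne f2.ne hρ
  rw [mul_assoc, ← ENNReal.mul_rpow_of_nonneg _ _ (by positivity)]
  simp_rw [← ENNReal.mul_rpow_of_nonneg _ _ (show (0:ℝ) ≤ 1 / 2 by norm_num)] at main
  have hPt : volume E * volume Es ≠ ⊤ := ENNReal.mul_ne_top f1.ne f2.ne
  generalize volume E * volume Es = P at main hPt ⊢
  by_cases hP : P = 0
  · refine (main 1 one_pos).trans ?_
    rw [hP]; simp
  · have hpos : 0 < P.toReal := ENNReal.toReal_pos hP hPt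
    have h := main (P.toReal ^ (-1 / ((d:ℝ) + 1))) (Real.rpow_pos_of_pos hpos _)
    rw [← ENNReal.ofReal_rpow_of_pos hpos, ENNReal.ofReal_toReal hPt, ← ENNReal.rpow_mul,
      ← ENNReal.rpow_add _ _ hP hPt, hn] at h
    have h1 : P ^ (-1 / ((d:ℝ) + 1)) * P = P ^ ((d:ℝ) / (d + 1)) := by
      nth_rw 2 [← ENNReal.rpow_one P]
      rw [← ENNReal.rpow_add _ _ hP hPt]
      congr 1; field_simp; ring
    have h2 : -1 / ((d:ℝ) + 1) * (-((d:ℝ) - 1) / 2) + 1 / 2 = (d:ℝ) / (d + 1) := by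
      field_simp; ring
    rw [h1, h2, ← two_mul] at h
    simpa using h
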